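/- The ℂ-linear span of the ten functions θ¹²[δ₁], …, θ¹²[δ₁₀] has dimension exactly 10, and the ℂ-linear span of the twenty functions {θ¹²[δᵢ] : i=1,…,10} ∪ {Ξ₆[δⱼ] : j=1,…,10} has dimension exactly 15. -/

import Mathlib

open scoped BigOperators

namespace TwoLoop

/-- 2×2 complex matrices. -/
abbrev Mat2 := Matrix (Fin 2) (Fin 2) ℂ

/-- The genus-2 Siegel upper half space: symmetric 2×2 complex matrices with
positive definite imaginary part. -/
def SiegelH2 : Set Mat2 := {τ | τ.transpose = τ ∧ (τ.map Complex.im).PosDef}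

/-- A (half-integer) theta characteristic `[a;b]`, recorded by its rows `a, b ∈ {0,1}²`. -/
abbrev Char := (Fin 2 → ℤ) × (Fin 2 → ℤ)

/-- The theta constant `θ[a;b](τ) = Σ_{n ∈ ℤ²} exp(πi (n+a/2)ᵀ τ (n+a/2) + πi (n+a/2)·b)`. -/
noncomputable def theta (κ : Char) (τ : Mat2) : ℂ :=
  ∑' n : Fin 2 → ℤ,
    Complex.exp ((Real.pi : ℂ) * Complex.I *
      ((∑ i, ∑ j, ((n i : ℂ) + (κ.1 i : ℂ) / 2) * τ i j * ((n j : ℂ) + (κ.1 j : ℂ) / 2))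
        + ∑ i, ((n i : ℂ) + (κ.1 i : ℂ) / 2) * (κ.2 i : ℂ)))

/-- The ten even characteristics δ₁,…,δ₁₀. -/
def δev : Fin 10 → Char :=
  ![(![0,0], ![0,0]), (![0,0], ![0,1]), (![0,0], ![1,0]), (![0,0], ![1,1]),
    (![0,1], ![0,0]), (![0,1], ![1,0]), (![1,0], ![0,0]), (![1,0], ![0,1]),
    (![1,1], ![0,0]), (![1,1], ![1,1])]

/-- The six odd characteristics ν₁,…,ν₆. -/
def νodd : Fin 6 → Char :=
  ![(![0,1], ![0,1]), (![1,0], ![1,0]), (![0,1], ![1,1]),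
    (![1,0], ![1,1]), (![1,1], ![0,1]), (![1,1], ![1,0])]

/-- `Θ[ε](τ) = θ[ε;0](2τ)`. -/
noncomputable def Θf (ε : Fin 2 → ℤ) (τ : Mat2) : ℂ := theta (ε, ![0,0]) ((2 : ℂ) • τ)

noncomputable def P0 (τ : Mat2) : ℂ :=
  Θf ![0,0] τ ^ 4 + Θf ![0,1] τ ^ 4 + Θf ![1,0] τ ^ 4 + Θf ![1,1] τ ^ 4
noncomputable def P1 (τ : Mat2) : ℂ :=
  2 * (Θf ![0,0] τ ^ 2 * Θf ![0,1] τ ^ 2 + Θf ![1,0] τ ^ 2 * Θf ![1,1] τ ^ 2)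
noncomputable def P2 (τ : Mat2) : ℂ :=
  2 * (Θf ![0,0] τ ^ 2 * Θf ![1,0] τ ^ 2 + Θf ![0,1] τ ^ 2 * Θf ![1,1] τ ^ 2)
noncomputable def P3 (τ : Mat2) : ℂ :=
  2 * (Θf ![0,0] τ ^ 2 * Θf ![1,1] τ ^ 2 + Θf ![0,1] τ ^ 2 * Θf ![1,0] τ ^ 2)
noncomputable def P4 (τ : Mat2) : ℂ :=
  4 * (Θf ![0,0] τ * Θf ![0,1] τ * Θf ![1,0] τ * Θf ![1,1] τ)

/-- The vector `(P₀,…,P₄)`. -/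
noncomputable def Pv : Fin 5 → Mat2 → ℂ := ![P0, P1, P2, P3, P4]

open MvPolynomial in
/-- The Igusa quartic as a polynomial in `x₀,…,x₄`. -/
noncomputable def I4poly : MvPolynomial (Fin 5) ℂ :=
  X 4 ^ 4 + X 4 ^ 2 * X 0 ^ 2 - X 4 ^ 2 * X 1 ^ 2 - X 4 ^ 2 * X 2 ^ 2 - X 4 ^ 2 * X 3 ^ 2
    + X 1 ^ 2 * X 2 ^ 2 + X 1 ^ 2 * X 3 ^ 2 + X 2 ^ 2 * X 3 ^ 2
    - 2 * (X 0 * X 1 * X 2 * X 3)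

/-- The signature `⟨κ|λ⟩ = exp(πi(a_κ·b_λ − b_κ·a_λ))`. -/
noncomputable def sig (κ lam : Char) : ℂ :=
  Complex.exp ((Real.pi : ℂ) * Complex.I *
    (((∑ i, κ.1 i * lam.2 i : ℤ) : ℂ) - ((∑ i, κ.2 i * lam.1 i : ℤ) : ℂ)))

/-- Componentwise mod-2 sum of characteristics. -/
def addChar (κ lam : Char) : Char :=
  (fun i => (κ.1 i + lam.1 i) % 2, fun i => (κ.2 i + lam.2 i) % 2)

/-- For each even characteristic `δ_d`, the ordering `(k₁,…,k₆)` of `{1,…,6}` (0-indexed) whose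
first three entries form the triad of odd characteristics with `δ_d = ν_{k₁}+ν_{k₂}+ν_{k₃}`
and whose last three are the complementary indices. -/
def triad : Fin 10 → Fin 6 → Fin 6 :=
  ![![0,3,5,1,2,4], ![0,1,5,2,3,4], ![0,1,4,2,3,5], ![0,3,4,1,2,5], ![0,1,3,2,4,5],
    ![0,4,5,1,2,3], ![0,1,2,3,4,5], ![0,2,3,1,4,5], ![0,2,5,1,3,4], ![0,2,4,1,3,5]]

/-- D'Hoker–Phong's `Ξ₆[δ]`. -/
noncomputable def Xi6 (d : Fin 10) (τ : Mat2) : ℂ :=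
  ∑ i : Fin 3, ∑ j : Fin 3,
    if i < j then
      sig (νodd (triad d (Fin.castLE (by norm_num) i))) (νodd (triad d (Fin.castLE (by norm_num) j))) *
        ∏ m : Fin 3,
          theta (addChar (addChar (νodd (triad d (Fin.castLE (by norm_num) i)))
              (νodd (triad d (Fin.castLE (by norm_num) j))))
            (νodd (triad d (⟨m.1 + 3, by omega⟩ : Fin 6)))) τ ^ 4
    else 0

/-- The formal derivative `∂I₄/∂θ⁴[δ]` of the Igusa quartic with respect to the ten fourth
powers of the even theta constants, regarded as independent variables. -/
noncomputable def Dd (d : Fin 10) (τ : Mat2) : ℂ :=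
  (1 / 48 : ℂ) *
    (theta (δev d) τ ^ 4 * (∑ d' : Fin 10, theta (δev d') τ ^ 8) - 4 * theta (δev d) τ ^ 12)

/-- `f_δ = 2Ξ₆[δ] − ∂I₄/∂θ⁴[δ]`. -/
noncomputable def fδ (d : Fin 10) (τ : Mat2) : ℂ := 2 * Xi6 d τ - Dd d τ

/-- `Ψ₆`, the weight-6 modular form. -/
noncomputable def Ψ6 (τ : Mat2) : ℂ :=
  P0 τ ^ 3 - 9 * P0 τ * (P1 τ ^ 2 + P2 τ ^ 2 + P3 τ ^ 2 - 4 * P4 τ ^ 2)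
    + 54 * (P1 τ * P2 τ * P3 τ)

/-- `Ψ₁₀`, the weight-10 modular form. -/
noncomputable def Ψ10 (τ : Mat2) : ℂ := ∏ d : Fin 10, theta (δev d) τ ^ 2

/-- A characteristic is even when `a·b` is even. -/
def IsEvenChar (κ : Char) : Prop := (∑ i, κ.1 i * κ.2 i) % 2 = 0

/-- A characteristic is odd when `a·b` is odd. -/
def IsOddChar (κ : Char) : Prop := (∑ i, κ.1 i * κ.2 i) % 2 = 1

/-!
The fourth powers `θ⁴[δ]` are the ten linear forms `riemannMatrix` in `P₀, …, P₄`, so the `θ¹²[δ]`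
are the cubes of these forms, while the `Ξ₆[δ]` are the ten linear forms evaluated at the gradient
of the Igusa quartic. Since `riemannMatrix` is injective, the `Ξ₆[δ]` span the same space as the
five partial derivatives, and the theorem amounts to the linear independence of fifteen cubic
polynomials in `P₀, …, P₄`.

The `Pᵢ` are quartics in the four second-order theta constants `Θ[ε]`, which satisfy no homogeneous
relation: along a suitable ray to the cusp, distinct monomials of the same degree decay at distinct
exponential rates. A linear relation between the fifteen cubics may therefore be evaluated at
arbitrary complex values of the `Θ[ε]`. On lines parametrising one-dimensional boundary components
the gradient of the Igusa quartic vanishes, and five such lines force the coefficients of the cubes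
to vanish; the values at five further points then determine the coefficients of the gradient.
-/

section ThetaSeries

open Matrix

/-- The summand of index `n` in the series defining `theta κ τ`. -/
noncomputable def thetaTerm (κ : Char) (τ : Mat2) (n : Fin 2 → ℤ) : ℂ :=
  Complex.exp ((Real.pi : ℂ) * Complex.I *
    ((∑ i, ∑ j, ((n i : ℂ) + (κ.1 i : ℂ) / 2) * τ i j * ((n j : ℂ) + (κ.1 j : ℂ) / 2))
      + ∑ i, ((n i : ℂ) + (κ.1 i : ℂ) / 2) * (κ.2 i : ℂ)))

lemma theta_eq_tsum (κ : Char) (τ : Mat2) : theta κ τ = ∑' n, thetaTerm κ τ n := rfl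

lemma two_smul_mem_SiegelH2 {τ : Mat2} (hτ : τ ∈ SiegelH2) : (2 : ℂ) • τ ∈ SiegelH2 := by
  refine ⟨by rw [transpose_smul, hτ.1], ?_⟩
  have him : ((2 : ℂ) • τ).map Complex.im = (2 : ℝ) • τ.map Complex.im := by
    ext i j
    simp
  rw [him]
  exact hτ.2.smul two_pos

open scoped MatrixOrder Matrix.Norms.L2Operator in
lemma exists_pos_mul_dotProduct_self_le {ι : Type*} [Fintype ι] [Nonempty ι] {M : Matrix ι ι ℝ}
    (hM : M.PosDef) : ∃ c > 0, ∀ x : ι → ℝ, c * (x ⬝ᵥ x) ≤ x ⬝ᵥ M *ᵥ x := by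
  classical
  obtain ⟨c, hc, hcM⟩ := (CFC.exists_pos_algebraMap_le_iff hM.isHermitian).2
    fun x hx => hM.isStrictlyPositive.spectrum_pos hx
  refine ⟨c, hc, fun x => ?_⟩
  have hnonneg := (Matrix.le_iff.1 hcM).dotProduct_mulVec_nonneg x
  simpa [sub_mulVec, Algebra.algebraMap_eq_smul_one, smul_mulVec, dotProduct_sub] using hnonneg

lemma summable_exp_neg_mul_int_add_sq {c : ℝ} (hc : 0 < c) (s : ℝ) :
    Summable fun n : ℤ => Real.exp (-Real.pi * c * ((n : ℝ) + s) ^ 2) := by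
  have hterm := ((summable_jacobiTheta₂_term_iff (Complex.I * c * s) (Complex.I * c)).2
    (by simpa using hc)).norm.mul_left (Real.exp (-Real.pi * c * s ^ 2))
  refine hterm.congr fun n => ?_
  rw [norm_jacobiTheta₂_term, ← Real.exp_add]
  congr 1
  simp
  ring

lemma summable_exp_neg_mul_dotProduct_self {c : ℝ} (hc : 0 < c) (s : Fin 2 → ℝ) :
    Summable fun n : Fin 2 → ℤ =>
      Real.exp (-Real.pi * (c * ((fun i => n i + s i) ⬝ᵥ fun i => n i + s i))) := by
  have hprod := (summable_exp_neg_mul_int_add_sq hc (s 0)).mul_of_nonneg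
    (summable_exp_neg_mul_int_add_sq hc (s 1))
    (fun _ => (Real.exp_pos _).le) fun _ => (Real.exp_pos _).le
  refine ((finTwoArrowEquiv ℤ).summable_iff.2 hprod).congr fun n => ?_
  change Real.exp (-Real.pi * c * (n 0 + s 0) ^ 2) * Real.exp (-Real.pi * c * (n 1 + s 1) ^ 2) = _
  simp only [← Real.exp_add, dotProduct, Fin.sum_univ_two]
  congr 1
  ring

lemma norm_thetaTerm (κ : Char) (τ : Mat2) (n : Fin 2 → ℤ) :
    ‖thetaTerm κ τ n‖ = Real.exp (-Real.pi *
      ((fun i => n i + (κ.1 i : ℝ) / 2) ⬝ᵥ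
        τ.map Complex.im *ᵥ fun i => n i + (κ.1 i : ℝ) / 2)) := by
  have hcast (k l : ℤ) : (k : ℂ) + (l : ℂ) / 2 = ((k + l / 2 : ℝ) : ℂ) := by push_cast; rfl
  rw [thetaTerm, Complex.norm_exp]
  congr 1
  simp only [hcast]
  simp only [Fin.sum_univ_two, dotProduct, mulVec, map_apply, ← Complex.ofReal_intCast,
    Complex.mul_re, Complex.mul_im, Complex.add_re, Complex.add_im,
    Complex.ofReal_re, Complex.ofReal_im, Complex.I_re, Complex.I_im]
  ring

lemma summable_norm_thetaTerm (κ : Char) {τ : Mat2} (hτ : τ ∈ SiegelH2) :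
    Summable fun n => ‖thetaTerm κ τ n‖ := by
  obtain ⟨c, hc, hle⟩ := exists_pos_mul_dotProduct_self_le hτ.2
  refine Summable.of_nonneg_of_le (fun _ => norm_nonneg _) (fun n => ?_)
    (summable_exp_neg_mul_dotProduct_self hc fun i => (κ.1 i : ℝ) / 2)
  rw [norm_thetaTerm, Real.exp_le_exp]
  exact mul_le_mul_of_nonpos_left (hle _) (neg_nonpos.2 Real.pi_pos.le)

lemma theta_add_two_mul (a b c : Fin 2 → ℤ) (τ : Mat2) :
    theta (fun i => a i + 2 * c i, b) τ = theta (a, b) τ := by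
  rw [theta_eq_tsum, theta_eq_tsum, ← (Equiv.addRight c).tsum_eq (thetaTerm (a, b) τ)]
  refine tsum_congr fun n => ?_
  simp only [thetaTerm, Fin.sum_univ_two, Equiv.coe_addRight, Pi.add_apply, Int.cast_add,
    Int.cast_mul, Int.cast_ofNat]
  congr 1
  ring

lemma theta_emod_two (a b : Fin 2 → ℤ) (τ : Mat2) :
    theta (fun i => a i % 2, b) τ = theta (a, b) τ := by
  rw [← theta_add_two_mul _ b fun i => a i / 2]
  simp only [Int.emod_add_mul_ediv]

end ThetaSeries

section Duplication

lemma exp_pi_mul_I_mul_int (k : ℤ) :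
    Complex.exp ((Real.pi : ℂ) * Complex.I * (k : ℂ)) = (-1) ^ k := by
  rw [mul_comm, Complex.exp_int_mul, Complex.exp_pi_mul_I]

/-- The reindexing `(m, n) = (u + v + e, u - v)` of pairs of lattice vectors, where `e ∈ {0,1}²`
is the class of `m + n` modulo 2. -/
def sumDiffEquiv : (Fin 2 → Fin 2) × (Fin 2 → ℤ) × (Fin 2 → ℤ) ≃ (Fin 2 → ℤ) × (Fin 2 → ℤ) where
  toFun x := (fun i => x.2.1 i + x.2.2 i + (x.1 i : ℤ), fun i => x.2.1 i - x.2.2 i)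
  invFun p := (fun i => ⟨((p.1 i + p.2 i) % 2).toNat, by omega⟩,
    fun i => (p.1 i + p.2 i) / 2, fun i => (p.1 i + p.2 i) / 2 - p.2 i)
  left_inv x := by
    ext i <;> dsimp only <;> omega
  right_inv p := by
    ext i <;> dsimp only <;> omega

lemma thetaTerm_mul_thetaTerm (a b : Fin 2 → ℤ) (τ : Mat2) (e : Fin 2 → Fin 2)
    (u v : Fin 2 → ℤ) :
    thetaTerm (a, b) τ (fun i => u i + v i + (e i : ℤ)) * thetaTerm (a, b) τ (fun i => u i - v i) =
      (-1) ^ (∑ i, ((e i : ℤ) + a i) * b i) *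
        (thetaTerm (fun i => (e i : ℤ) + a i, ![0, 0]) ((2 : ℂ) • τ) u *
          thetaTerm (fun i => (e i : ℤ), ![0, 0]) ((2 : ℂ) • τ) v) := by
  simp only [thetaTerm]
  rw [← exp_pi_mul_I_mul_int, ← Complex.exp_add, ← Complex.exp_add, ← Complex.exp_add,
    Complex.exp_eq_exp_iff_exists_int]
  refine ⟨∑ i, u i * b i, ?_⟩
  simp only [Fin.sum_univ_two, Matrix.smul_apply, Matrix.cons_val_zero, Matrix.cons_val_one,
    smul_eq_mul]
  push_cast
  ring

lemma theta_sq (a b : Fin 2 → ℤ) {τ : Mat2} (hτ : τ ∈ SiegelH2) :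
    theta (a, b) τ ^ 2 = ∑ e : Fin 2 → Fin 2,
      (-1) ^ (∑ i, ((e i : ℤ) + a i) * b i) *
        (Θf (fun i => (e i : ℤ) + a i) τ * Θf (fun i => (e i : ℤ)) τ) := by
  have hnorm := summable_norm_thetaTerm (a, b) hτ
  have hnorm' (κ : Char) := summable_norm_thetaTerm κ (two_smul_mem_SiegelH2 hτ)
  have hprod := sumDiffEquiv.summable_iff.2 (summable_mul_of_summable_norm hnorm hnorm)
  rw [Function.comp_def] at hprod
  rw [pow_two, theta_eq_tsum, tsum_mul_tsum_of_summable_norm hnorm hnorm,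
    ← sumDiffEquiv.tsum_eq, hprod.tsum_prod, tsum_fintype]
  refine Finset.sum_congr rfl fun e _ => ?_
  rw [Θf, Θf, theta_eq_tsum, theta_eq_tsum, tsum_mul_tsum_of_summable_norm (hnorm' _) (hnorm' _),
    ← tsum_mul_left]
  exact tsum_congr fun z => thetaTerm_mul_thetaTerm a b τ e z.1 z.2

lemma Θf_emod_two (m n : ℤ) (τ : Mat2) : Θf ![m % 2, n % 2] τ = Θf ![m, n] τ := by
  rw [Θf, Θf, ← theta_emod_two ![m, n]]
  congr 2
  ext i
  fin_cases i <;> rfl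

/-- The matrix expressing the fourth powers of the even theta constants as linear forms in
`P₀, …, P₄`; its columns span the solutions of Riemann's linear relations. -/
def riemannMatrix : Matrix (Fin 10) (Fin 5) ℂ :=
  !![1,  1,  1,  1,  0;
     1, -1,  1, -1,  0;
     1,  1, -1, -1,  0;
     1, -1, -1,  1,  0;
     0,  2,  0,  0,  2;
     0,  2,  0,  0, -2;
     0,  0,  2,  0,  2;
     0,  0,  2,  0, -2;
     0,  0,  0,  2,  2;
     0,  0,  0,  2, -2]

open Matrix in
lemma riemannMatrix_mulVec (y : Fin 5 → ℂ) :
    riemannMatrix *ᵥ y =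
      ![y 0 + y 1 + y 2 + y 3, y 0 - y 1 + y 2 - y 3, y 0 + y 1 - y 2 - y 3,
        y 0 - y 1 - y 2 + y 3, 2 * (y 1 + y 4), 2 * (y 1 - y 4), 2 * (y 2 + y 4),
        2 * (y 2 - y 4), 2 * (y 3 + y 4), 2 * (y 3 - y 4)] := by
  ext d
  fin_cases d <;> simp [riemannMatrix, mulVec, dotProduct, Fin.sum_univ_five] <;> ring

lemma theta_sq_eq (a b c d : ℤ) {τ : Mat2} (hτ : τ ∈ SiegelH2) :
    theta (![a, b], ![c, d]) τ ^ 2 =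
      (-1) ^ (a * c + b * d) * (Θf ![a % 2, b % 2] τ * Θf ![0, 0] τ) +
      (-1) ^ (a * c + (1 + b) * d) * (Θf ![a % 2, (1 + b) % 2] τ * Θf ![0, 1] τ) +
      ((-1) ^ ((1 + a) * c + b * d) * (Θf ![(1 + a) % 2, b % 2] τ * Θf ![1, 0] τ) +
      (-1) ^ ((1 + a) * c + (1 + b) * d) *
        (Θf ![(1 + a) % 2, (1 + b) % 2] τ * Θf ![1, 1] τ)) := by
  have hfst (e : Fin 2 × Fin 2) :
      (fun i => ((finTwoArrowEquiv (Fin 2)).symm e i : ℤ) + ![a, b] i) = ![e.1 + a, e.2 + b] := by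
    ext i
    fin_cases i <;> rfl
  have hsnd (e : Fin 2 × Fin 2) :
      (fun i => ((finTwoArrowEquiv (Fin 2)).symm e i : ℤ)) = ![(e.1 : ℤ), (e.2 : ℤ)] := by
    ext i
    fin_cases i <;> rfl
  rw [theta_sq _ _ hτ, ← (finTwoArrowEquiv (Fin 2)).symm.sum_comp]
  simp only [hfst, hsnd, Θf_emod_two]
  simp [Fintype.sum_prod_type, Fin.sum_univ_two]

open Matrix in
lemma theta_pow_four (d : Fin 10) {τ : Mat2} (hτ : τ ∈ SiegelH2) :
    theta (δev d) τ ^ 4 = (riemannMatrix *ᵥ fun i => Pv i τ) d := by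
  have hpow : theta (δev d) τ ^ 4 = (theta (δev d) τ ^ 2) ^ 2 := by ring
  rw [riemannMatrix_mulVec, hpow]
  fin_cases d <;> simp [δev, theta_sq_eq _ _ _ _ hτ, Pv, P0, P1, P2, P3, P4] <;> ring

end Duplication

section IgusaGradient

open MvPolynomial Matrix

lemma riemannMatrix_transpose_mul_self :
    riemannMatrixᵀ * riemannMatrix = diagonal ![4, 12, 12, 12, 24] := by
  ext i j
  fin_cases i <;> fin_cases j <;>
    norm_num [riemannMatrix, mul_apply, Fin.sum_univ_succ, diagonal]

lemma exists_mul_riemannMatrix_eq_one :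
    ∃ N : Matrix (Fin 5) (Fin 10) ℂ, N * riemannMatrix = 1 := by
  refine ⟨diagonal (![4, 12, 12, 12, 24] : Fin 5 → ℂ)⁻¹ * riemannMatrixᵀ, ?_⟩
  rw [Matrix.mul_assoc, riemannMatrix_transpose_mul_self, diagonal_mul_diagonal, ← diagonal_one]
  congr 1
  ext i
  fin_cases i <;> simp

/-- The gradient of the Igusa quartic with respect to the quadratic form
`riemannMatrixᵀ * riemannMatrix`; the weights are `24` times the inverses of its diagonal entries.
The `Ξ₆[δ]` are the image of its value at `P₀, …, P₄` under `riemannMatrix`. -/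
noncomputable def igusaGradient (i : Fin 5) : MvPolynomial (Fin 5) ℂ :=
  C (![6, 2, 2, 2, 1] i) * pderiv i I4poly

lemma eval_igusaGradient (y : Fin 5 → ℂ) :
    (fun i => eval y (igusaGradient i)) =
      ![12 * (y 4 ^ 2 * y 0 - y 1 * y 2 * y 3),
        4 * (y 1 * (y 2 ^ 2 + y 3 ^ 2 - y 4 ^ 2) - y 0 * y 2 * y 3),
        4 * (y 2 * (y 1 ^ 2 + y 3 ^ 2 - y 4 ^ 2) - y 0 * y 1 * y 3),
        4 * (y 3 * (y 1 ^ 2 + y 2 ^ 2 - y 4 ^ 2) - y 0 * y 1 * y 2),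
        2 * y 4 * (2 * y 4 ^ 2 + y 0 ^ 2 - y 1 ^ 2 - y 2 ^ 2 - y 3 ^ 2)] := by
  ext i
  fin_cases i <;>
    simp [igusaGradient, I4poly, pderiv_X, ← map_ofNat (C : ℂ →+* _)] <;> ring

lemma sig_eq_neg_one_zpow (κ lam : Char) :
    sig κ lam = (-1) ^ (∑ i, κ.1 i * lam.2 i - ∑ i, κ.2 i * lam.1 i) := by
  rw [← exp_pi_mul_I_mul_int, sig, Int.cast_sub]

lemma addChar_vec (a b c d a' b' c' d' : ℤ) :
    addChar (![a, b], ![c, d]) (![a', b'], ![c', d']) =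
      (![(a + a') % 2, (b + b') % 2], ![(c + c') % 2, (d + d') % 2]) := by
  ext i <;> fin_cases i <;> rfl

lemma Xi6_eq_riemannMatrix_mulVec (d : Fin 10) {τ : Mat2} (hτ : τ ∈ SiegelH2) :
    Xi6 d τ =
      (riemannMatrix *ᵥ fun i => eval (fun j => Pv j τ) (igusaGradient i)) d := by
  have hpow (d : Fin 10) := theta_pow_four d hτ
  simp only [riemannMatrix_mulVec, δev, Fin.forall_fin_succ, Matrix.cons_val_zero,
    Matrix.cons_val_succ, IsEmpty.forall_iff, and_true] at hpow
  rw [eval_igusaGradient, riemannMatrix_mulVec]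
  fin_cases d <;>
    simp [Xi6, Fin.sum_univ_three, Fin.prod_univ_three, νodd, triad, sig_eq_neg_one_zpow,
      addChar_vec, hpow] <;>
    ring

end IgusaGradient

section Asymptotics

open Asymptotics Filter

lemma isTheta_tsum_exp_neg_mul {ι : Type*} {f : ι → ℝ} {i₀ : ι} (hmin : ∀ i, f i₀ ≤ f i)
    (hf : Summable fun i => Real.exp (-f i)) :
    (fun t => ∑' i, Real.exp (-(t * f i))) =Θ[atTop] fun t => Real.exp (-(t * f i₀)) := by
  have hle (t : ℝ) (ht : 1 ≤ t) (i : ι) :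
      Real.exp (-(t * f i)) ≤ Real.exp (f i₀) * Real.exp (-(t * f i₀)) * Real.exp (-f i) := by
    rw [← Real.exp_add, ← Real.exp_add, Real.exp_le_exp]
    nlinarith [hmin i]
  have hsummable (t : ℝ) (ht : 1 ≤ t) : Summable fun i => Real.exp (-(t * f i)) :=
    .of_nonneg_of_le (fun _ => (Real.exp_pos _).le) (hle t ht) (hf.mul_left _)
  have hnonneg (t : ℝ) : 0 ≤ ∑' i, Real.exp (-(t * f i)) := tsum_nonneg fun _ => (Real.exp_pos _).le
  constructor
  · refine IsBigO.of_bound (Real.exp (f i₀) * ∑' i, Real.exp (-f i)) ?_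
    filter_upwards [eventually_ge_atTop 1] with t ht
    rw [Real.norm_of_nonneg (hnonneg t), Real.norm_of_nonneg (Real.exp_pos _).le]
    calc ∑' i, Real.exp (-(t * f i))
        ≤ ∑' i, Real.exp (f i₀) * Real.exp (-(t * f i₀)) * Real.exp (-f i) :=
          (hsummable t ht).tsum_le_tsum (hle t ht) (hf.mul_left _)
      _ = Real.exp (f i₀) * (∑' i, Real.exp (-f i)) * Real.exp (-(t * f i₀)) := by
          rw [tsum_mul_left]
          ring
  · refine IsBigO.of_bound 1 ?_
    filter_upwards [eventually_ge_atTop 1] with t ht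
    rw [Real.norm_of_nonneg (hnonneg t), Real.norm_of_nonneg (Real.exp_pos _).le, one_mul]
    exact (hsummable t ht).le_tsum i₀ fun _ _ => (Real.exp_pos _).le

lemma eq_zero_of_eventually_sum_mul_eq_zero {α ι κ 𝕜 : Type*} [LinearOrder κ] [NormedField 𝕜]
    {l : Filter α} {s : Finset ι} {w : ι → κ} {f : ι → α → 𝕜} {c : ι → 𝕜}
    (hw : Set.InjOn w s) (hf : ∀ i ∈ s, ∀ j ∈ s, w i < w j → f j =o[l] f i)
    (hne : ∀ i ∈ s, ∃ᶠ x in l, f i x ≠ 0) (hsum : ∀ᶠ x in l, ∑ i ∈ s, c i * f i x = 0) :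
    ∀ i ∈ s, c i = 0 := by
  classical
  by_contra! hc
  obtain ⟨i, hi, hmin⟩ := (s.filter (c · ≠ 0)).exists_min_image w
    (by simpa [Finset.filter_nonempty_iff] using hc)
  rw [Finset.mem_filter] at hi
  have hothers : ∀ j ∈ s.erase i, (fun x => c j * f j x) =o[l] f i := by
    intro j hj
    obtain ⟨hji, hjs⟩ := Finset.mem_erase.1 hj
    by_cases hcj : c j = 0
    · simp [hcj]
    · have hwij : w i < w j := (hmin j (Finset.mem_filter.2 ⟨hjs, hcj⟩)).lt_of_ne
        fun heq => hji (hw hjs hi.1 heq.symm)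
      exact (hf i hi.1 j hjs hwij).const_mul_left _
  have hself : (fun x => c i * f i x) =o[l] f i := by
    refine (IsLittleO.sum hothers).neg_left.congr' ?_ EventuallyEq.rfl
    filter_upwards [hsum] with x hx
    rw [← Finset.add_sum_erase s _ hi.1] at hx
    rw [Finset.sum_apply]
    exact (eq_neg_of_add_eq_zero_left hx).symm
  exact isLittleO_irrefl (hne i hi.1) ((isLittleO_const_mul_left_iff hi.2).1 hself)

end Asymptotics

section SecondOrderTheta

open Asymptotics Filter Matrix MvPolynomial

/-- Selling's parametrisation of binary quadratic forms. -/
def sellingForm (α β γ : ℝ) (x : Fin 2 → ℝ) : ℝ :=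
  α * x 0 ^ 2 + β * x 1 ^ 2 + γ * (x 0 - x 1) ^ 2

/-- The ray `t ↦ i t S` in the Siegel upper half space, where `S` is the Gram matrix of
`sellingForm α β γ`. -/
noncomputable def sellingRay (α β γ t : ℝ) : Mat2 :=
  (t * Complex.I) • !![(α + γ : ℂ), -γ; -γ, β + γ]

variable {α β γ : ℝ}

lemma sellingForm_pos (hα : 0 < α) (hβ : 0 < β) (hγ : 0 < γ) {x : Fin 2 → ℝ} (hx : x ≠ 0) :
    0 < sellingForm α β γ x := by
  have hx' : x 0 ≠ 0 ∨ x 1 ≠ 0 := by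
    contrapose! hx
    ext i
    fin_cases i
    exacts [hx.1, hx.2]
  rw [sellingForm]
  rcases hx' with h | h <;> positivity

lemma sellingForm_le_sellingForm_two_mul_add (hα : 0 < α) (hβ : 0 < β) (hγ : 0 < γ)
    {ε : Fin 2 → ℤ} (hε : ∀ i, ε i = 0 ∨ ε i = 1) (n : Fin 2 → ℤ) :
    sellingForm α β γ (fun i => ε i) ≤ sellingForm α β γ (fun i => 2 * n i + ε i) := by
  have hsq {e : ℤ} (he : |e| ≤ 1) (k : ℤ) : (e : ℝ) ^ 2 ≤ (2 * k + e) ^ 2 := by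
    have habs : |e| ≤ |2 * k + e| := by grind
    exact_mod_cast sq_le_sq.2 habs
  have h0 := hsq (e := ε 0) (by grind) (n 0)
  have h1 := hsq (e := ε 1) (by grind) (n 1)
  have h01 := hsq (e := ε 0 - ε 1) (by grind) (n 0 - n 1)
  rw [sellingForm, sellingForm]
  push_cast at h01
  have hdiff : (2 * n 0 + ε 0 : ℝ) - (2 * n 1 + ε 1) = 2 * (n 0 - n 1) + (ε 0 - ε 1) := by ring
  rw [hdiff]
  gcongr

lemma sellingRay_mem_SiegelH2 (hα : 0 < α) (hβ : 0 < β) (hγ : 0 < γ) {t : ℝ} (ht : 0 < t) :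
    sellingRay α β γ t ∈ SiegelH2 := by
  have him : (sellingRay α β γ t).map Complex.im = t • !![α + γ, -γ; -γ, β + γ] := by
    ext i j
    fin_cases i <;> fin_cases j <;> simp [sellingRay]
  refine ⟨by ext i j; fin_cases i <;> fin_cases j <;> simp [sellingRay], ?_⟩
  rw [him]
  refine PosDef.smul (.of_dotProduct_mulVec_pos ?_ fun x hx => ?_) ht
  · simp [IsHermitian, ← ext_iff, Fin.forall_fin_two]
  · have heq : star x ⬝ᵥ !![α + γ, -γ; -γ, β + γ] *ᵥ x = sellingForm α β γ x := by
      simp only [sellingForm, dotProduct, mulVec, Fin.sum_univ_two, star_trivial, of_apply,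
        cons_val_zero, cons_val_one, cons_val', cons_val_fin_one]
      ring
    rw [heq]
    exact sellingForm_pos hα hβ hγ hx

lemma thetaTerm_two_smul_sellingRay (ε : Fin 2 → ℤ) (t : ℝ) (n : Fin 2 → ℤ) :
    thetaTerm (ε, ![0, 0]) ((2 : ℂ) • sellingRay α β γ t) n =
      (Real.exp (-(t * (Real.pi / 2 * sellingForm α β γ fun i => 2 * n i + ε i))) : ℂ) := by
  rw [Complex.ofReal_exp, thetaTerm]
  congr 1
  simp [sellingRay, sellingForm, Fin.sum_univ_two]
  linear_combination (Real.pi / 2 * t * (α * (2 * n 0 + ε 0) ^ 2 + β * (2 * n 1 + ε 1) ^ 2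
    + γ * (2 * n 0 + ε 0 - (2 * n 1 + ε 1)) ^ 2) : ℂ) * Complex.I_sq

lemma isTheta_Θf_sellingRay (hα : 0 < α) (hβ : 0 < β) (hγ : 0 < γ)
    {ε : Fin 2 → ℤ} (hε : ∀ i, ε i = 0 ∨ ε i = 1) :
    (fun t => Θf ε (sellingRay α β γ t)) =Θ[atTop]
      fun t => Real.exp (-(t * (Real.pi / 2 * sellingForm α β γ fun i => ε i))) := by
  have hsummable : Summable fun n : Fin 2 → ℤ =>
      Real.exp (-(Real.pi / 2 * sellingForm α β γ fun i => 2 * n i + ε i)) := by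
    refine (summable_norm_thetaTerm (ε, ![0, 0])
      (two_smul_mem_SiegelH2 (sellingRay_mem_SiegelH2 hα hβ hγ one_pos))).congr fun n => ?_
    rw [thetaTerm_two_smul_sellingRay, Complex.norm_of_nonneg (Real.exp_pos _).le, one_mul]
  have hmin (n : Fin 2 → ℤ) :
      Real.pi / 2 * sellingForm α β γ (fun i => 2 * (0 : Fin 2 → ℤ) i + ε i) ≤
        Real.pi / 2 * sellingForm α β γ (fun i => 2 * n i + ε i) := by
    have := sellingForm_le_sellingForm_two_mul_add hα hβ hγ hε n
    simpa using mul_le_mul_of_nonneg_left this Real.pi_div_two_pos.le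
  simp only [Θf, theta_eq_tsum, thetaTerm_two_smul_sellingRay, ← Complex.ofReal_tsum]
  simpa using (Complex.isTheta_ofReal _ _).trans (isTheta_tsum_exp_neg_mul hmin hsummable)

/-- The characteristics `ε` of the four second-order theta constants `Θ[ε]`. -/
def secondOrderChar : Fin 4 → Fin 2 → ℤ := ![![0, 0], ![0, 1], ![1, 0], ![1, 1]]

lemma secondOrderChar_eq_zero_or_one (e : Fin 4) (i : Fin 2) :
    secondOrderChar e i = 0 ∨ secondOrderChar e i = 1 := by
  revert e i
  decide

/-- The exponential decay rate of the monomial `∏ Θ[ε] ^ m ε` along `sellingRay`, up to the factor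
`π / 2`. -/
noncomputable def decayRate (α β γ : ℝ) (m : Fin 4 →₀ ℕ) : ℝ :=
  ∑ e, m e * sellingForm α β γ fun i => secondOrderChar e i

lemma isTheta_prod_Θf_sellingRay (hα : 0 < α) (hβ : 0 < β) (hγ : 0 < γ) (m : Fin 4 →₀ ℕ) :
    (fun t => ∏ e, Θf (secondOrderChar e) (sellingRay α β γ t) ^ m e) =Θ[atTop]
      fun t => Real.exp (-(Real.pi / 2 * decayRate α β γ m * t)) := by
  have hfactor (e : Fin 4) :=
    (isTheta_Θf_sellingRay hα hβ hγ (secondOrderChar_eq_zero_or_one e)).pow (m e)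
  refine (IsTheta.finsetProd fun e (_ : e ∈ Finset.univ) => hfactor e).trans_eventuallyEq
    (.of_eq (funext fun t => ?_))
  simp only [← Real.exp_nat_mul, ← Real.exp_sum, decayRate, Finset.mul_sum, Finset.sum_mul,
    ← Finset.sum_neg_distrib]
  exact congrArg _ (Finset.sum_congr rfl fun e _ => by ring)

-- With these parameters the rate is a number in base `n + 2` whose digits determine the monomial.
lemma injOn_decayRate (n : ℕ) :
    Set.InjOn (decayRate (n + 2) ((n + 2) ^ 2) 1) {m | ∑ e, m e = n} := by
  have hdigits (m : Fin 4 →₀ ℕ) : decayRate (n + 2) ((n + 2) ^ 2) 1 m =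
      (Nat.ofDigits (n + 2) [m 1 + m 2, m 2 + m 3, m 1 + m 3] : ℕ) := by
    simp [decayRate, sellingForm, secondOrderChar, Fin.sum_univ_four, Nat.ofDigits_cons]
    ring
  have hlt {m : Fin 4 →₀ ℕ} (hm : ∑ e, m e = n) :
      ∀ k ∈ [m 1 + m 2, m 2 + m 3, m 1 + m 3], k < n + 2 := by
    rw [Fin.sum_univ_four] at hm
    simp only [List.forall_mem_cons, List.not_mem_nil, IsEmpty.forall_iff, implies_true, and_true]
    omega
  intro m hm m' hm' heq
  rw [Set.mem_ofPred_eq] at hm hm'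
  rw [hdigits, hdigits, Nat.cast_inj] at heq
  have hlist := Nat.ofDigits_inj_of_len_eq (Nat.one_lt_succ_succ n) (by rfl) (hlt hm) (hlt hm') heq
  simp only [List.cons.injEq, and_true] at hlist
  rw [Fin.sum_univ_four] at hm hm'
  ext e
  fin_cases e <;> simp <;> omega

theorem eq_zero_of_forall_eval_Θf_eq_zero {F : MvPolynomial (Fin 4) ℂ} {n : ℕ}
    (hF : F.IsHomogeneous n)
    (hzero : ∀ τ ∈ SiegelH2, eval (fun e => Θf (secondOrderChar e) τ) F = 0) : F = 0 := by
  have hpos : (0 : ℝ) < n + 2 := by positivity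
  have hasymp := isTheta_prod_Θf_sellingRay hpos (pow_pos hpos 2) one_pos
  have hcoeff : ∀ m ∈ F.support, F.coeff m = 0 := by
    refine eq_zero_of_eventually_sum_mul_eq_zero (l := atTop)
      (w := decayRate (n + 2) ((n + 2) ^ 2) 1)
      (f := fun m t => ∏ e, Θf (secondOrderChar e) (sellingRay (n + 2) ((n + 2) ^ 2) 1 t) ^ m e)
      ((injOn_decayRate n).mono fun m hm => ?_) (fun m _ m' _ hlt => ?_) (fun m _ => ?_) ?_
    · simpa [Finsupp.weight_apply, Finsupp.sum_fintype] using hF (mem_support_iff.1 hm)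
    · refine (hasymp m').trans_isLittleO (IsLittleO.trans_isTheta ?_ (hasymp m).symm)
      rw [Real.isLittleO_exp_comp_exp_comp]
      refine (tendsto_id.const_mul_atTop
        (mul_pos Real.pi_div_two_pos (sub_pos.2 hlt))).congr fun t => ?_
      simp only [id]
      ring
    · refine ((hasymp m).eq_zero_iff.mono fun t ht => ?_).frequently
      simpa using ht
    · filter_upwards [eventually_gt_atTop 0] with t ht
      rw [← eval_eq']
      exact hzero _ (sellingRay_mem_SiegelH2 hpos (pow_pos hpos 2) one_pos ht)
  ext m
  by_contra hm
  exact hm (hcoeff m (mem_support_iff.2 hm))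

end SecondOrderTheta

section Independence

open Matrix MvPolynomial

/-- The quartics `p₀, …, p₄` giving `P₀, …, P₄` in terms of the second-order theta constants. -/
noncomputable def thetaQuartic : Fin 5 → MvPolynomial (Fin 4) ℂ :=
  ![X 0 ^ 4 + X 1 ^ 4 + X 2 ^ 4 + X 3 ^ 4,
    2 * (X 0 ^ 2 * X 1 ^ 2 + X 2 ^ 2 * X 3 ^ 2),
    2 * (X 0 ^ 2 * X 2 ^ 2 + X 1 ^ 2 * X 3 ^ 2),
    2 * (X 0 ^ 2 * X 3 ^ 2 + X 1 ^ 2 * X 2 ^ 2),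
    4 * (X 0 * X 1 * X 2 * X 3)]

lemma eval_thetaQuartic (x : Fin 4 → ℂ) :
    (fun i => eval x (thetaQuartic i)) =
      ![x 0 ^ 4 + x 1 ^ 4 + x 2 ^ 4 + x 3 ^ 4,
        2 * (x 0 ^ 2 * x 1 ^ 2 + x 2 ^ 2 * x 3 ^ 2),
        2 * (x 0 ^ 2 * x 2 ^ 2 + x 1 ^ 2 * x 3 ^ 2),
        2 * (x 0 ^ 2 * x 3 ^ 2 + x 1 ^ 2 * x 2 ^ 2),
        4 * (x 0 * x 1 * x 2 * x 3)] := by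
  ext i
  fin_cases i <;> simp [thetaQuartic]

lemma isHomogeneous_thetaQuartic (i : Fin 5) : (thetaQuartic i).IsHomogeneous 4 := by
  have hX (e : Fin 4) (n : ℕ) := isHomogeneous_X_pow (R := ℂ) e n
  have hsq (e₁ e₂ e₃ e₄ : Fin 4) :
      (2 * (X e₁ ^ 2 * X e₂ ^ 2 + X e₃ ^ 2 * X e₄ ^ 2) : MvPolynomial (Fin 4) ℂ).IsHomogeneous 4 :=
    (((hX _ 2).mul (hX _ 2)).add ((hX _ 2).mul (hX _ 2))).C_mul 2
  fin_cases i
  · exact (((hX 0 4).add (hX 1 4)).add (hX 2 4)).add (hX 3 4)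
  · exact hsq 0 1 2 3
  · exact hsq 0 2 1 3
  · exact hsq 0 3 1 2
  · exact ((((isHomogeneous_X ℂ 0).mul (isHomogeneous_X ℂ 1)).mul
      (isHomogeneous_X ℂ 2)).mul (isHomogeneous_X ℂ 3)).C_mul 4

lemma eval_Θf_thetaQuartic (τ : Mat2) :
    (fun i => eval (fun e => Θf (secondOrderChar e) τ) (thetaQuartic i)) = fun i => Pv i τ := by
  rw [eval_thetaQuartic]
  ext i
  fin_cases i <;> rfl

lemma eval_thetaQuartic_eq_zero {G : MvPolynomial (Fin 5) ℂ} {n : ℕ} (hG : G.IsHomogeneous n)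
    (hzero : ∀ τ ∈ SiegelH2, eval (fun i => Pv i τ) G = 0) (x : Fin 4 → ℂ) :
    eval (fun i => eval x (thetaQuartic i)) G = 0 := by
  have heval (x : Fin 4 → ℂ) :
      eval x (aeval thetaQuartic G) = eval (fun i => eval x (thetaQuartic i)) G :=
    comp_aeval_apply thetaQuartic (aeval x) G
  rw [← heval, eq_zero_of_forall_eval_Θf_eq_zero (hG.aeval _ isHomogeneous_thetaQuartic), map_zero]
  intro τ hτ
  rw [heval, eval_Θf_thetaQuartic, hzero τ hτ]

lemma eq_zero_of_forall_sextic_eq_zero {K : Type*} [Field K] [CharZero K] {α β γ : K}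
    (h : ∀ u v : K,
      α * (u ^ 2 + v ^ 2) ^ 6 + β * (u ^ 2 - v ^ 2) ^ 6 + γ * (2 * u * v) ^ 6 = 0) :
    α = 0 ∧ β = 0 ∧ γ = 0 := by
  have h10 := h 1 0
  have h11 := h 1 1
  have h21 := h 2 1
  norm_num at h10 h11 h21
  refine ⟨?_, ?_, ?_⟩
  · linear_combination (h21 - 729 * h10 - 64 * h11) / 10800
  · linear_combination h10 - (h21 - 729 * h10 - 64 * h11) / 10800
  · linear_combination h11 / 64 - (h21 - 729 * h10 - 64 * h11) / 10800

lemma cube_coeff_eq_zero {a : Fin 10 → ℂ} {b : Fin 5 → ℂ}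
    (h : ∀ x : Fin 4 → ℂ,
      ∑ d, a d * (riemannMatrix *ᵥ fun i => eval x (thetaQuartic i)) d ^ 3 +
        ∑ i, b i * eval (fun j => eval x (thetaQuartic j)) (igusaGradient i) = 0) :
    a = 0 := by
  -- The gradient of the Igusa quartic vanishes on the five lines used below.
  have hgrad (y : Fin 5 → ℂ) (i : Fin 5) := congrFun (eval_igusaGradient y) i
  simp only [eval_thetaQuartic, riemannMatrix_mulVec, hgrad, Fin.sum_univ_succ, cons_val_zero,
    cons_val_succ, Finset.univ_eq_empty, Finset.sum_empty] at h
  obtain ⟨h02, -, h45⟩ := eq_zero_of_forall_sextic_eq_zero (α := a 0 + a 2) (β := a 1 + a 3)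
    (γ := a 4 + a 5) fun u v => by linear_combination (norm := (simp; ring)) h ![u, v, 0, 0]
  obtain ⟨h01, -, h67⟩ := eq_zero_of_forall_sextic_eq_zero (α := a 0 + a 1) (β := a 2 + a 3)
    (γ := a 6 + a 7) fun u v => by linear_combination (norm := (simp; ring)) h ![u, 0, v, 0]
  obtain ⟨h03, h12, h89⟩ := eq_zero_of_forall_sextic_eq_zero (α := a 0 + a 3) (β := a 1 + a 2)
    (γ := a 8 + a 9) fun u v => by linear_combination (norm := (simp; ring)) h ![u, 0, 0, v]
  obtain ⟨h04, -, h68⟩ := eq_zero_of_forall_sextic_eq_zero (α := a 0 + a 4) (β := a 2 + a 5)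
    (γ := a 6 + a 8) fun u v => by
      linear_combination (norm := (simp; ring)) h ![u, u, v, v] / 64
  obtain ⟨h06, -, -⟩ := eq_zero_of_forall_sextic_eq_zero (α := a 0 + a 6) (β := a 1 + a 7)
    (γ := a 4 + a 8) fun u v => by
      linear_combination (norm := (simp; ring)) h ![u, v, u, v] / 64
  have h0 : a 0 = 0 := by linear_combination (h01 + h02 - h12) / 2
  clear h
  ext d
  fin_cases d <;> simp <;> grind

lemma igusaGradient_coeff_eq_zero {b : Fin 5 → ℂ}
    (h : ∀ x : Fin 4 → ℂ,
      ∑ i, b i * eval (fun j => eval x (thetaQuartic j)) (igusaGradient i) = 0) :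
    b = 0 := by
  have hgrad (y : Fin 5 → ℂ) (i : Fin 5) := congrFun (eval_igusaGradient y) i
  simp only [eval_thetaQuartic, hgrad, Fin.sum_univ_succ, cons_val_zero, cons_val_succ,
    Finset.univ_eq_empty, Finset.sum_empty] at h
  -- Multiplying one coordinate by `I` changes the signs of two of `p₁, p₂, p₃` here.
  have h0 : -6 * b 0 + b 1 + b 2 + b 3 = 0 := by
    linear_combination (norm := (simp; ring)) h ![1, 1, 1, 0] / 16
  have h1 : -6 * b 0 - b 1 - b 2 + b 3 = 0 := by
    linear_combination (norm := (simp; ring)) h ![Complex.I, 1, 1, 0] / 16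
  have h2 : -6 * b 0 - b 1 + b 2 - b 3 = 0 := by
    linear_combination (norm := (simp; ring)) h ![1, Complex.I, 1, 0] / 16
  have h3 : -6 * b 0 + b 1 - b 2 - b 3 = 0 := by
    linear_combination (norm := (simp; ring)) h ![1, 1, Complex.I, 0] / 16
  have hb0 : b 0 = 0 := by linear_combination -(h0 + h1 + h2 + h3) / 24
  have hb1 : b 1 = 0 := by linear_combination (h0 + h3) / 2 + 6 * hb0
  have hb2 : b 2 = 0 := by linear_combination (h0 + h2) / 2 + 6 * hb0
  have hb3 : b 3 = 0 := by linear_combination (h0 + h1) / 2 + 6 * hb0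
  have hb4 : b 4 = 0 := by
    linear_combination (norm := (simp [hb0, hb1, hb2, hb3]; ring)) h ![1, 1, 1, 2] / 3024
  ext i
  fin_cases i
  exacts [hb0, hb1, hb2, hb3, hb4]

/-- The cubic forms in `P₀, …, P₄` whose values are the `θ¹²[δ]`, followed by the gradient of the
Igusa quartic. -/
noncomputable def weightSixCubic : Fin 10 ⊕ Fin 5 → MvPolynomial (Fin 5) ℂ :=
  Sum.elim (fun d => (∑ j, C (riemannMatrix d j) * X j) ^ 3) igusaGradient

lemma eval_weightSixCubic_inl (y : Fin 5 → ℂ) (d : Fin 10) :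
    eval y (weightSixCubic (.inl d)) = (riemannMatrix *ᵥ y) d ^ 3 := by
  simp [weightSixCubic, mulVec, dotProduct]

lemma isHomogeneous_I4poly : I4poly.IsHomogeneous 4 := by
  have hsq (i j : Fin 5) := (isHomogeneous_X_pow (R := ℂ) i 2).mul (isHomogeneous_X_pow j 2)
  have hprod := (((isHomogeneous_X ℂ (0 : Fin 5)).mul (isHomogeneous_X ℂ 1)).mul
    (isHomogeneous_X ℂ 2)).mul (isHomogeneous_X ℂ 3)
  exact ((((((((isHomogeneous_X_pow 4 4).add (hsq 4 0)).sub (hsq 4 1)).sub (hsq 4 2)).sub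
    (hsq 4 3)).add (hsq 1 2)).add (hsq 1 3)).add (hsq 2 3)).sub (hprod.C_mul 2)

lemma isHomogeneous_weightSixCubic (k : Fin 10 ⊕ Fin 5) : (weightSixCubic k).IsHomogeneous 3 := by
  rcases k with d | i
  · exact (IsHomogeneous.sum _ _ _ fun j _ => (isHomogeneous_X ℂ j).C_mul _).pow 3
  · exact (isHomogeneous_I4poly.pderiv).C_mul _

/-- The weight-six modular forms obtained by evaluating `weightSixCubic` at `P₀, …, P₄`. -/
noncomputable def weightSixForm (k : Fin 10 ⊕ Fin 5) (τ : SiegelH2) : ℂ :=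
  eval (fun i => Pv i τ.1) (weightSixCubic k)

theorem linearIndependent_weightSixForm : LinearIndependent ℂ weightSixForm := by
  rw [Fintype.linearIndependent_iff]
  intro c hc
  have hG : (∑ k, C (c k) * weightSixCubic k).IsHomogeneous 3 :=
    .sum _ _ _ fun k _ => (isHomogeneous_weightSixCubic k).C_mul _
  have hrel (x : Fin 4 → ℂ) := eval_thetaQuartic_eq_zero hG (fun τ hτ => by
    simpa [weightSixForm] using congrFun hc ⟨τ, hτ⟩) x
  simp only [Fintype.sum_sum_type, map_add, map_sum, map_mul, eval_C, eval_weightSixCubic_inl]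
    at hrel
  have ha := cube_coeff_eq_zero (a := fun d => c (.inl d)) (b := fun i => c (.inr i)) hrel
  have hb := igusaGradient_coeff_eq_zero (b := fun i => c (.inr i)) fun x => by
    simpa [funext_iff.1 ha, weightSixCubic] using hrel x
  rintro (d | i)
  exacts [congrFun ha d, congrFun hb i]

end Independence

section Span

open Matrix MvPolynomial

lemma span_range_sum_smul_eq {R V m n : Type*} [Semiring R] [AddCommMonoid V] [Module R V]
    [Fintype m] [Fintype n] [DecidableEq n] {N : Matrix n m R} {M : Matrix m n R}
    (hNM : N * M = 1) (g : n → V) :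
    Submodule.span R (Set.range fun i => ∑ j, M i j • g j) = Submodule.span R (Set.range g) := by
  refine le_antisymm (Submodule.span_le.2 ?_) (Submodule.span_le.2 ?_)
  · rintro _ ⟨i, rfl⟩
    exact Submodule.sum_smul_mem _ _ fun j _ => Submodule.subset_span ⟨j, rfl⟩
  · rintro _ ⟨j, rfl⟩
    have hg : ∑ i, N j i • ∑ k, M i k • g k = g j := by
      simp only [Finset.smul_sum, smul_smul]
      rw [Finset.sum_comm]
      simp only [← Finset.sum_smul, ← mul_apply, hNM, one_apply, ite_smul, one_smul, zero_smul,
        Finset.sum_ite_eq, Finset.mem_univ, if_true]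
    rw [← hg]
    exact Submodule.sum_smul_mem _ _ fun i _ => Submodule.subset_span ⟨i, rfl⟩

lemma theta_pow_twelve_eq :
    (fun (d : Fin 10) (τ : SiegelH2) => theta (δev d) τ.1 ^ 12) =
      weightSixForm ∘ Sum.inl := by
  ext d τ
  rw [Function.comp_apply, weightSixForm, eval_weightSixCubic_inl, ← theta_pow_four d τ.2,
    ← pow_mul]

lemma span_range_Xi6 :
    Submodule.span ℂ (Set.range fun (d : Fin 10) (τ : SiegelH2) => Xi6 d τ.1) =
      Submodule.span ℂ (Set.range (weightSixForm ∘ Sum.inr)) := by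
  obtain ⟨N, hN⟩ := exists_mul_riemannMatrix_eq_one
  rw [← span_range_sum_smul_eq hN]
  congr 2
  ext d τ
  rw [Xi6_eq_riemannMatrix_mulVec d τ.2]
  simp [mulVec, dotProduct, weightSixForm, weightSixCubic]

end Span

/-- the span of the `θ¹²[δ]` has dimension exactly 10, and the span of the
`θ¹²[δ]` together with the `Ξ₆[δ]` has dimension exactly 15. -/
theorem statement17 :
    Module.finrank ℂ ↥(Submodule.span ℂ
      (Set.range fun d : Fin 10 => fun τ : SiegelH2 => theta (δev d) τ.1 ^ 12)) = 10 ∧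
    Module.finrank ℂ ↥(Submodule.span ℂ
      ((Set.range fun d : Fin 10 => fun τ : SiegelH2 => theta (δev d) τ.1 ^ 12)
        ∪ (Set.range fun d : Fin 10 => fun τ : SiegelH2 => Xi6 d τ.1))) = 15 := by
  have hindep := linearIndependent_weightSixForm
  rw [theta_pow_twelve_eq]
  constructor
  · rw [finrank_span_eq_card (hindep.comp Sum.inl Sum.inl_injective), Fintype.card_fin]
  · rw [Submodule.span_union, span_range_Xi6, ← Submodule.span_union, ← Set.Sum.elim_range,
      Sum.elim_comp_inl_inr, finrank_span_eq_card hindep, Fintype.card_sum, Fintype.card_fin,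
      Fintype.card_fin]

end TwoLoop
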